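/- Let 𝒟_m(u,s) := (2/m) Σ_{l=1}^m cos((l−1/2)πu)·cos((l−1/2)πs). For every continuous f : [0,1]² → ℝ, m ∫_0^1 ∫_0^u 𝒟_m(s,u)² f(s,u) ds du → (1/2) ∫_0^1 f(s,s) ds as m → ∞. -/

import Mathlib

open Real Finset MeasureTheory

/-- The SIML kernel `𝒟_m(u,s) = (2/m) Σ_{l=1}^m cos((l−1/2)πu) cos((l−1/2)πs)`. -/
noncomputable def Dker (m : ℕ) (u s : ℝ) : ℝ :=
  (2 / (m : ℝ)) * ∑ l ∈ Finset.Icc 1 m,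
    Real.cos (((l : ℝ) - 1 / 2) * π * u) * Real.cos (((l : ℝ) - 1 / 2) * π * s)

theorem cos_sub_cos_mul_sum (m : ℕ) (s u : ℝ) :
    (Real.cos (π * s) - Real.cos (π * u)) * ∑ l ∈ Finset.Icc 1 m,
      Real.cos (((l : ℝ) - 1 / 2) * π * s) * Real.cos (((l : ℝ) - 1 / 2) * π * u) =
    1 / 2 * (Real.cos (((m : ℝ) + 1 / 2) * π * s) * Real.cos (((m : ℝ) - 1 / 2) * π * u) -
      Real.cos (((m : ℝ) - 1 / 2) * π * s) * Real.cos (((m : ℝ) + 1 / 2) * π * u)) := by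
  have three_term : ∀ (x t : ℝ), 2 * (Real.cos (π * t) * Real.cos ((x + 1 / 2) * π * t)) =
      Real.cos ((x + 1 + 1 / 2) * π * t) + Real.cos ((x - 1 / 2) * π * t) := by
    intro x t
    rw [show (x + 1 + 1 / 2) * π * t = (x + 1 / 2) * π * t + π * t by ring,
      show (x - 1 / 2) * π * t = (x + 1 / 2) * π * t - π * t by ring, Real.cos_add, Real.cos_sub]
    ring
  induction m with
  | zero =>
    have h : ∀ t : ℝ, Real.cos ((((0 : ℕ) : ℝ) - 1 / 2) * π * t) =
        Real.cos ((((0 : ℕ) : ℝ) + 1 / 2) * π * t) := fun t ↦ by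
      rw [← Real.cos_neg]; congr 1; push_cast; ring
    simp only [h]
    simp
  | succ m ih =>
    rw [Finset.sum_Icc_succ_top (by omega), mul_add, ih]
    push_cast
    have e : (m : ℝ) + 1 - 1 / 2 = m + 1 / 2 := by ring
    rw [e]
    have h1 := three_term m s
    have h2 := three_term m u
    linear_combination (1 / 2 * Real.cos (((m : ℝ) + 1 / 2) * π * u)) * h1 -
      (1 / 2 * Real.cos (((m : ℝ) + 1 / 2) * π * s)) * h2

theorem abs_cos_sub_cos_mul_Dker_le (m : ℕ) (s u : ℝ) :
    |(Real.cos (π * s) - Real.cos (π * u)) * Dker m s u| ≤ 2 / m := by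
  have h : (Real.cos (π * s) - Real.cos (π * u)) * Dker m s u =
      1 / m * (Real.cos (((m : ℝ) + 1 / 2) * π * s) * Real.cos (((m : ℝ) - 1 / 2) * π * u) -
      Real.cos (((m : ℝ) - 1 / 2) * π * s) * Real.cos (((m : ℝ) + 1 / 2) * π * u)) := by
    rw [Dker, mul_left_comm, cos_sub_cos_mul_sum]
    ring
  have hc : ∀ x y : ℝ, |Real.cos x * Real.cos y| ≤ 1 := fun x y ↦ by
    rw [abs_mul]
    exact mul_le_one₀ (Real.abs_cos_le_one _) (abs_nonneg _) (Real.abs_cos_le_one _)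
  rw [h, abs_mul, abs_of_nonneg (by positivity), show (2 : ℝ) / m = 1 / m * 2 by ring]
  gcongr
  refine (abs_sub _ _).trans ((add_le_add (hc _ _) (hc _ _)).trans_eq one_add_one_eq_two)

theorem mul_Dker_sq_mul_cos_sub_cos_sq_le (m : ℕ) (s u : ℝ) :
    m * (Dker m s u ^ 2 * (Real.cos (π * s) - Real.cos (π * u)) ^ 2) ≤ 4 / m := by
  have h := pow_le_pow_left₀ (abs_nonneg _) (abs_cos_sub_cos_mul_Dker_le m s u) 2
  rw [sq_abs] at h
  rcases Nat.eq_zero_or_pos m with rfl | hm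
  · simp
  have hm' : (0 : ℝ) < m := by exact_mod_cast hm
  calc (m : ℝ) * (Dker m s u ^ 2 * (Real.cos (π * s) - Real.cos (π * u)) ^ 2)
      = m * ((Real.cos (π * s) - Real.cos (π * u)) * Dker m s u) ^ 2 := by ring
    _ ≤ (m : ℝ) * (2 / m) ^ 2 := by gcongr
    _ = 4 / m := by field_simp; norm_num

theorem Dker_comm (m : ℕ) (s u : ℝ) : Dker m s u = Dker m u s := by
  simp only [Dker, mul_comm]

theorem continuous_Dker (m : ℕ) : Continuous fun p : ℝ × ℝ ↦ Dker m p.1 p.2 := by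
  unfold Dker
  fun_prop

theorem continuous_Dker_left (m : ℕ) (u : ℝ) : Continuous fun s ↦ Dker m s u := by
  unfold Dker
  fun_prop

theorem integral_cos_int_mul_pi (n : ℤ) :
    ∫ s in (0 : ℝ)..1, Real.cos (n * π * s) = if n = 0 then 1 else 0 := by
  split_ifs with h
  · simp [h]
  · have h0 : (n : ℝ) * π ≠ 0 := mul_ne_zero (by exact_mod_cast h) pi_ne_zero
    rw [intervalIntegral.integral_comp_mul_left (fun x ↦ Real.cos x) h0]
    simp [Real.sin_int_mul_pi]

theorem integral_cos_half_mul_cos_half {k l : ℕ} (hk : 1 ≤ k) (hl : 1 ≤ l) :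
    ∫ s in (0 : ℝ)..1, Real.cos (((k : ℝ) - 1 / 2) * π * s) * Real.cos (((l : ℝ) - 1 / 2) * π * s) =
      if k = l then 1 / 2 else 0 := by
  have h : ∀ s : ℝ, Real.cos (((k : ℝ) - 1 / 2) * π * s) * Real.cos (((l : ℝ) - 1 / 2) * π * s) =
      1 / 2 * (Real.cos (((k - l : ℤ) : ℝ) * π * s) + Real.cos (((k + l - 1 : ℤ) : ℝ) * π * s)) := by
    intro s
    push_cast
    rw [show ((k : ℝ) - l) * π * s = ((k : ℝ) - 1 / 2) * π * s - ((l : ℝ) - 1 / 2) * π * s by ring,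
      show ((k : ℝ) + l - 1) * π * s = ((k : ℝ) - 1 / 2) * π * s + ((l : ℝ) - 1 / 2) * π * s by ring,
      Real.cos_add, Real.cos_sub]
    ring
  simp only [h]
  rw [intervalIntegral.integral_const_mul, intervalIntegral.integral_add
    (Continuous.intervalIntegrable (by fun_prop) _ _)
    (Continuous.intervalIntegrable (by fun_prop) _ _),
    integral_cos_int_mul_pi, integral_cos_int_mul_pi,
    if_neg (show ¬ ((k : ℤ) + l - 1 = 0) by omega)]
  have : ((k : ℤ) - l = 0) ↔ k = l := by omega
  simp [this]

theorem mul_integral_Dker_sq (m : ℕ) (u : ℝ) :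
    m * ∫ s in (0 : ℝ)..1, Dker m s u ^ 2 = Dker m u u := by
  set c : ℕ → ℝ → ℝ := fun l t ↦ Real.cos (((l : ℝ) - 1 / 2) * π * t) with hc
  have hcc : ∀ l, Continuous (c l) := fun l ↦ by simp only [hc]; fun_prop
  have h : ∀ s, Dker m s u ^ 2 = (2 / (m : ℝ)) ^ 2 * ∑ k ∈ Finset.Icc 1 m, ∑ l ∈ Finset.Icc 1 m,
      c k u * c l u * (c k s * c l s) := by
    intro s
    rw [Dker, mul_pow, sq (∑ l ∈ Finset.Icc 1 m, _), Finset.sum_mul_sum]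
    congr 1
    refine Finset.sum_congr rfl fun k _ ↦ Finset.sum_congr rfl fun l _ ↦ ?_
    simp only [hc]; ring
  have h_int : ∀ k l, IntervalIntegrable (fun s ↦ c k u * c l u * (c k s * c l s)) volume 0 1 :=
    fun k l ↦ Continuous.intervalIntegrable (by fun_prop) _ _
  simp only [h]
  rw [intervalIntegral.integral_const_mul, intervalIntegral.integral_finsetSum
    fun k _ ↦ by simpa only [Finset.sum_fn] using
      IntervalIntegrable.sum (Finset.Icc 1 m) fun l _ ↦ h_int k l]
  have h2 : ∀ k ∈ Finset.Icc 1 m, ∫ s in (0 : ℝ)..1, ∑ l ∈ Finset.Icc 1 m,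
      c k u * c l u * (c k s * c l s) = 1 / 2 * (c k u * c k u) := by
    intro k hk
    rw [intervalIntegral.integral_finsetSum fun l _ ↦ h_int k l, Finset.sum_eq_single_of_mem k hk]
    · rw [intervalIntegral.integral_const_mul, integral_cos_half_mul_cos_half
        (Finset.mem_Icc.1 hk).1 (Finset.mem_Icc.1 hk).1, if_pos rfl]
      ring
    · intro l hl hlk
      rw [intervalIntegral.integral_const_mul, integral_cos_half_mul_cos_half
        (Finset.mem_Icc.1 hk).1 (Finset.mem_Icc.1 hl).1, if_neg hlk.symm, mul_zero]
  rw [Finset.sum_congr rfl h2, ← Finset.mul_sum, Dker]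
  rcases Nat.eq_zero_or_pos m with rfl | hm
  · simp
  have hm' : (m : ℝ) ≠ 0 := by positivity
  change _ = 2 / (m : ℝ) * ∑ k ∈ Finset.Icc 1 m, c k u * c k u
  field_simp

theorem sin_mul_sum_cos_odd (m : ℕ) (u : ℝ) :
    2 * Real.sin (π * u) * ∑ l ∈ Finset.Icc 1 m, Real.cos (2 * (((l : ℝ) - 1 / 2) * π * u)) =
      Real.sin (2 * m * (π * u)) := by
  induction m with
  | zero => simp
  | succ m ih =>
    rw [Finset.sum_Icc_succ_top (by omega), mul_add, ih]
    push_cast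
    rw [show 2 * ((m : ℝ) + 1) * (π * u) = 2 * (((m : ℝ) + 1 - 1 / 2) * π * u) + π * u by ring,
      show 2 * (m : ℝ) * (π * u) = 2 * (((m : ℝ) + 1 - 1 / 2) * π * u) - π * u by ring,
      Real.sin_add, Real.sin_sub]
    ring

theorem Dker_self_le_two (m : ℕ) (u : ℝ) : Dker m u u ≤ 2 := by
  rcases Nat.eq_zero_or_pos m with rfl | hm
  · simp [Dker]
  have hm' : (0 : ℝ) < m := by exact_mod_cast hm
  have h : ∑ l ∈ Finset.Icc 1 m, Real.cos (((l : ℝ) - 1 / 2) * π * u) *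
      Real.cos (((l : ℝ) - 1 / 2) * π * u) ≤ m := by
    refine (Finset.sum_le_card_nsmul _ _ 1 fun l _ ↦ ?_).trans (by simp)
    rw [← sq]
    exact Real.cos_sq_le_one _
  calc Dker m u u ≤ 2 / m * m := by unfold Dker; gcongr
    _ = 2 := by field_simp

theorem Dker_self_eq {m : ℕ} (hm : m ≠ 0) (u : ℝ) : Dker m u u =
    1 + 1 / m * ∑ l ∈ Finset.Icc 1 m, Real.cos (2 * (((l : ℝ) - 1 / 2) * π * u)) := by
  have hm' : (m : ℝ) ≠ 0 := by exact_mod_cast hm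
  have h : ∑ l ∈ Finset.Icc 1 m, Real.cos (2 * (((l : ℝ) - 1 / 2) * π * u)) =
      2 * (∑ l ∈ Finset.Icc 1 m, Real.cos (((l : ℝ) - 1 / 2) * π * u) *
        Real.cos (((l : ℝ) - 1 / 2) * π * u)) - m := by
    simp only [Real.cos_two_mul, Finset.sum_sub_distrib, ← Finset.mul_sum, sq]
    simp
  rw [h, Dker, mul_sub, one_div_mul_cancel hm']
  ring

theorem tendsto_Dker_self {u : ℝ} (h0 : 0 < u) (h1 : u < 1) :
    Filter.Tendsto (fun m : ℕ ↦ Dker m u u) Filter.atTop (nhds 1) := by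
  have hs : 0 < Real.sin (π * u) :=
    Real.sin_pos_of_pos_of_lt_pi (by positivity) (by nlinarith [pi_pos])
  rw [tendsto_iff_norm_sub_tendsto_zero]
  refine squeeze_zero' (.of_forall fun _ ↦ norm_nonneg _) ?_
    (tendsto_const_div_atTop_nhds_zero_nat (1 / (2 * Real.sin (π * u))))
  filter_upwards [Filter.eventually_ne_atTop 0] with m hm
  rw [Dker_self_eq hm, add_sub_cancel_left, Real.norm_eq_abs, abs_mul,
    abs_of_nonneg (by positivity)]
  refine (mul_le_mul_of_nonneg_left ?_ (by positivity)).trans_eq (one_div_mul_eq_div _ _)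
  rw [le_div_iff₀ (by positivity), mul_comm]
  calc 2 * Real.sin (π * u) *
        |∑ l ∈ Finset.Icc 1 m, Real.cos (2 * (((l : ℝ) - 1 / 2) * π * u))|
      = |2 * Real.sin (π * u) *
          ∑ l ∈ Finset.Icc 1 m, Real.cos (2 * (((l : ℝ) - 1 / 2) * π * u))| := by
        rw [abs_mul (2 * Real.sin (π * u)), abs_of_pos (by positivity : 0 < 2 * Real.sin (π * u))]
    _ ≤ 1 := by rw [sin_mul_sum_cos_odd]; exact Real.abs_sin_le_one _

theorem exists_abs_sub_le_add_mul_cos_sub_cos_sq {h : ℝ → ℝ} (hh : Continuous h) {u : ℝ}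
    (hu : u ∈ Set.Icc (0 : ℝ) 1) {ε : ℝ} (hε : 0 < ε) :
    ∃ C : ℝ, ∀ s ∈ Set.Icc (0 : ℝ) 1,
      |h s - h u| ≤ ε + C * (Real.cos (π * s) - Real.cos (π * u)) ^ 2 := by
  set K : Set ℝ := Set.Icc 0 1 ∩ {s | ε ≤ |h s - h u|} with hK
  have hKc : IsCompact K := isCompact_Icc.inter_right (isClosed_le (by fun_prop) (by fun_prop))
  have hne : ∀ s ∈ K, (Real.cos (π * s) - Real.cos (π * u)) ^ 2 ≠ 0 := by
    rintro s ⟨hs, hs'⟩ h0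
    have hmem : ∀ t ∈ Set.Icc (0 : ℝ) 1, π * t ∈ Set.Icc 0 π := fun t ht ↦
      ⟨mul_nonneg pi_pos.le ht.1, mul_le_of_le_one_right pi_pos.le ht.2⟩
    have := Real.injOn_cos (hmem s hs) (hmem u hu) (sub_eq_zero.1 (pow_eq_zero_iff two_ne_zero |>.1 h0))
    have : s = u := mul_left_cancel₀ pi_ne_zero this
    subst this
    simp at hs'
    linarith
  obtain ⟨C, hC⟩ := hKc.exists_bound_of_continuousOn
    (f := fun s ↦ |h s - h u| / (Real.cos (π * s) - Real.cos (π * u)) ^ 2)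
    (ContinuousOn.div (by fun_prop) (by fun_prop) hne)
  refine ⟨max C 0, fun s hs ↦ ?_⟩
  have hnn : 0 ≤ max C 0 * (Real.cos (π * s) - Real.cos (π * u)) ^ 2 := by positivity
  by_cases hsε : ε ≤ |h s - h u|
  · have := (le_abs_self _).trans (hC s ⟨hs, hsε⟩)
    have hpos := lt_of_le_of_ne (sq_nonneg _) (hne s ⟨hs, hsε⟩).symm
    rw [div_le_iff₀ hpos] at this
    have : C * (Real.cos (π * s) - Real.cos (π * u)) ^ 2 ≤
      max C 0 * (Real.cos (π * s) - Real.cos (π * u)) ^ 2 := by gcongr; exact le_max_left _ _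
    linarith
  · linarith

theorem tendsto_mul_integral_Dker_sq_mul {h : ℝ → ℝ} (hh : Continuous h) {u : ℝ} (h0 : 0 < u)
    (h1 : u < 1) :
    Filter.Tendsto (fun m : ℕ ↦ m * ∫ s in (0 : ℝ)..1, Dker m s u ^ 2 * h s) Filter.atTop
      (nhds (h u)) := by
  have hD : ∀ m, Continuous fun s ↦ Dker m s u := fun m ↦ continuous_Dker_left m u
  have key : Filter.Tendsto
      (fun m : ℕ ↦ m * ∫ s in (0 : ℝ)..1, Dker m s u ^ 2 * (h s - h u)) Filter.atTop (nhds 0) := by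
    rw [Metric.tendsto_nhds]
    intro ε hε
    obtain ⟨C, hC⟩ := exists_abs_sub_le_add_mul_cos_sub_cos_sq hh ⟨h0.le, h1.le⟩
      (by positivity : 0 < ε / 4)
    have hC' : ∀ s ∈ Set.Icc (0 : ℝ) 1,
      |h s - h u| ≤ ε / 4 + |C| * (Real.cos (π * s) - Real.cos (π * u)) ^ 2 := fun s hs ↦
      (hC s hs).trans (by gcongr; exact le_abs_self C)
    filter_upwards [(tendsto_const_div_atTop_nhds_zero_nat (|C| * 4)).eventually_lt_const
      (half_pos hε)] with m hm
    rw [dist_zero_right, ← intervalIntegral.integral_const_mul]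
    calc ‖∫ s in (0 : ℝ)..1, (m : ℝ) * (Dker m s u ^ 2 * (h s - h u))‖
        ≤ ∫ s in (0 : ℝ)..1, (ε / 4 * (m * Dker m s u ^ 2) + |C| * 4 / m) := by
          refine intervalIntegral.norm_integral_le_of_norm_le zero_le_one
            (.of_forall fun s hs ↦ ?_) (Continuous.intervalIntegrable (by fun_prop) _ _)
          rw [Real.norm_eq_abs, abs_mul, abs_mul, abs_of_nonneg (Nat.cast_nonneg m),
            abs_of_nonneg (sq_nonneg _)]
          have hb := mul_le_mul_of_nonneg_left (mul_Dker_sq_mul_cos_sub_cos_sq_le m s u)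
            (abs_nonneg C)
          have ha := mul_le_mul_of_nonneg_left (hC' s ⟨hs.1.le, hs.2⟩)
            (by positivity : 0 ≤ m * Dker m s u ^ 2)
          have e : |C| * (4 / (m : ℝ)) = |C| * 4 / m := by ring
          nlinarith
      _ = ε / 4 * Dker m u u + |C| * 4 / m := by
          rw [intervalIntegral.integral_add (Continuous.intervalIntegrable (by fun_prop) _ _)
            (Continuous.intervalIntegrable (by fun_prop) _ _),
            intervalIntegral.integral_const_mul, intervalIntegral.integral_const_mul,
            mul_integral_Dker_sq]
          simp
      _ < ε := by nlinarith [Dker_self_le_two m u]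
  have := key.add ((tendsto_Dker_self h0 h1).mul_const (h u))
  rw [zero_add, one_mul] at this
  refine this.congr fun m ↦ ?_
  rw [← mul_integral_Dker_sq, mul_assoc, ← intervalIntegral.integral_mul_const, ← mul_add,
    ← intervalIntegral.integral_add (Continuous.intervalIntegrable (by fun_prop) _ _)
      (Continuous.intervalIntegrable (by fun_prop) _ _)]
  congr 2
  ext s
  ring

theorem norm_mul_integral_Dker_sq_mul_le {h : ℝ → ℝ} {M : ℝ} (hM0 : 0 ≤ M)
    (hM : ∀ s ∈ Set.Icc (0 : ℝ) 1, |h s| ≤ M) (m : ℕ) (u : ℝ) :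
    ‖m * ∫ s in (0 : ℝ)..1, Dker m s u ^ 2 * h s‖ ≤ 2 * M := by
  have hD : Continuous fun s ↦ Dker m s u := continuous_Dker_left m u
  have : ‖∫ s in (0 : ℝ)..1, Dker m s u ^ 2 * h s‖ ≤ ∫ s in (0 : ℝ)..1, Dker m s u ^ 2 * M := by
    refine intervalIntegral.norm_integral_le_of_norm_le zero_le_one
      (.of_forall fun s hs ↦ ?_) (Continuous.intervalIntegrable (by fun_prop) _ _)
    rw [Real.norm_eq_abs, abs_mul, abs_of_nonneg (sq_nonneg _)]
    gcongr
    exact hM s ⟨hs.1.le, hs.2⟩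
  calc ‖m * ∫ s in (0 : ℝ)..1, Dker m s u ^ 2 * h s‖
      = m * ‖∫ s in (0 : ℝ)..1, Dker m s u ^ 2 * h s‖ := by simp
    _ ≤ m * ∫ s in (0 : ℝ)..1, Dker m s u ^ 2 * M := by gcongr
    _ = Dker m u u * M := by
        rw [intervalIntegral.integral_mul_const, ← mul_assoc, mul_integral_Dker_sq]
    _ ≤ 2 * M := by gcongr; exact Dker_self_le_two m u

theorem integral_triangle_eq_half_of_symm {K : ℝ × ℝ → ℝ} (hK : Continuous K)
    (hsymm : ∀ s u, K (s, u) = K (u, s)) :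
    ∫ u in (0 : ℝ)..1, ∫ s in (0 : ℝ)..u, K (s, u) =
      1 / 2 * ∫ u in (0 : ℝ)..1, ∫ s in (0 : ℝ)..1, K (s, u) := by
  have hi : ∀ u a b, IntervalIntegrable (fun s ↦ K (s, u)) volume a b := fun u a b ↦
    Continuous.intervalIntegrable (by fun_prop) _ _
  have hc1 : Continuous fun u : ℝ ↦ ∫ s in (0 : ℝ)..u, K (s, u) :=
    intervalIntegral.continuous_parametric_intervalIntegral_of_continuous
      (f := fun u s ↦ K (s, u)) (by fun_prop) continuous_id
  have hc2 : Continuous fun u : ℝ ↦ ∫ s in u..1, K (s, u) := by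
    have : Continuous fun u : ℝ ↦ ∫ s in (1 : ℝ)..u, K (s, u) :=
      intervalIntegral.continuous_parametric_intervalIntegral_of_continuous
        (f := fun u s ↦ K (s, u)) (by fun_prop) continuous_id
    exact this.neg.congr fun u ↦ (intervalIntegral.integral_symm _ _).symm
  have hswap : ∫ u in (0 : ℝ)..1, ∫ s in u..1, K (s, u) =
      ∫ u in (0 : ℝ)..1, ∫ s in (0 : ℝ)..u, K (s, u) := by
    set g : ℝ × ℝ → ℝ := {p : ℝ × ℝ | p.1 < p.2}.indicator K with hg
    have hgi : Integrable g
        ((volume.restrict (Set.Ioc (0 : ℝ) 1)).prod (volume.restrict (Set.Ioc (0 : ℝ) 1))) := by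
      rw [Measure.prod_restrict]
      refine Integrable.indicator ?_ (measurableSet_lt measurable_fst measurable_snd)
      exact (hK.continuousOn.integrableOn_compact (isCompact_Icc.prod isCompact_Icc)).mono_set
        (Set.prod_mono Set.Ioc_subset_Icc_self Set.Ioc_subset_Icc_self)
    rw [intervalIntegral.integral_of_le zero_le_one, intervalIntegral.integral_of_le zero_le_one]
    calc ∫ u in Set.Ioc (0 : ℝ) 1, ∫ s in u..1, K (s, u)
        = ∫ u in Set.Ioc (0 : ℝ) 1, ∫ s in Set.Ioc (0 : ℝ) 1, g (u, s) := by
          refine setIntegral_congr_fun measurableSet_Ioc fun u hu ↦ ?_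
          have : ∀ s, g (u, s) = (Set.Ioi u).indicator (fun s ↦ K (s, u)) s := fun s ↦ by
            simp only [hg, Set.indicator_apply, Set.mem_ofPred_eq, Set.mem_Ioi, hsymm u s]
          simp only [this]
          rw [setIntegral_indicator measurableSet_Ioi, intervalIntegral.integral_of_le hu.2,
            Set.Ioc_inter_Ioi, max_eq_right hu.1.le]
      _ = ∫ s in Set.Ioc (0 : ℝ) 1, ∫ u in Set.Ioc (0 : ℝ) 1, g (u, s) :=
          integral_integral_swap (f := fun u s ↦ g (u, s)) hgi
      _ = ∫ u in Set.Ioc (0 : ℝ) 1, ∫ s in (0 : ℝ)..u, K (s, u) := by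
          refine setIntegral_congr_fun measurableSet_Ioc fun u hu ↦ ?_
          have : ∀ s, g (s, u) = (Set.Iio u).indicator (fun s ↦ K (s, u)) s := fun s ↦ by
            simp only [hg, Set.indicator_apply, Set.mem_ofPred_eq, Set.mem_Iio]
          simp only [this]
          have hset : Set.Ioc (0 : ℝ) 1 ∩ Set.Iio u = Set.Ioo 0 u := by
            ext s
            exact ⟨fun h ↦ ⟨h.1.1, h.2⟩, fun h ↦ ⟨⟨h.1, h.2.le.trans hu.2⟩, h.2⟩⟩
          rw [setIntegral_indicator measurableSet_Iio, intervalIntegral.integral_of_le hu.1.le,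
            hset, integral_Ioc_eq_integral_Ioo]
  have hsplit : ∫ u in (0 : ℝ)..1, ∫ s in (0 : ℝ)..1, K (s, u) =
      (∫ u in (0 : ℝ)..1, ∫ s in (0 : ℝ)..u, K (s, u)) + ∫ u in (0 : ℝ)..1, ∫ s in u..1, K (s, u) := by
    rw [← intervalIntegral.integral_add (hc1.intervalIntegrable _ _) (hc2.intervalIntegrable _ _)]
    congr 1
    ext u
    exact (intervalIntegral.integral_add_adjacent_intervals (hi _ _ _) (hi _ _ _)).symm
  rw [hsplit, hswap]
  ring

theorem tendsto_integral_mul_integral_Dker_sq_mul {F : ℝ × ℝ → ℝ} (hF : Continuous F) {M : ℝ}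
    (hM : ∀ p ∈ Set.Icc (0 : ℝ) 1 ×ˢ Set.Icc (0 : ℝ) 1, |F p| ≤ M) :
    Filter.Tendsto
      (fun m : ℕ ↦ ∫ u in (0 : ℝ)..1, m * ∫ s in (0 : ℝ)..1, Dker m s u ^ 2 * F (s, u))
      Filter.atTop (nhds (∫ u in (0 : ℝ)..1, F (u, u))) := by
  have hM0 : 0 ≤ M := (abs_nonneg _).trans (hM (0, 0) (by simp))
  refine intervalIntegral.tendsto_integral_filter_of_dominated_convergence (fun _ ↦ 2 * M)
    (.of_forall fun m ↦ ?_) (.of_forall fun m ↦ .of_forall fun u hu ↦ ?_)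
    intervalIntegrable_const ?_
  · have hc : Continuous fun p : ℝ × ℝ ↦ Dker m p.2 p.1 ^ 2 * F (p.2, p.1) :=
      (((continuous_Dker m).comp continuous_swap).pow 2).mul (hF.comp continuous_swap)
    have := intervalIntegral.continuous_parametric_intervalIntegral_of_continuous'
      (μ := volume) (f := fun u s ↦ Dker m s u ^ 2 * F (s, u)) hc 0 1
    exact (continuous_const.mul this).aestronglyMeasurable
  · rw [Set.uIoc_of_le zero_le_one] at hu
    exact norm_mul_integral_Dker_sq_mul_le hM0
      (fun s hs ↦ hM (s, u) ⟨hs, Set.Ioc_subset_Icc_self hu⟩) m u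
  · filter_upwards [Measure.ae_ne volume (1 : ℝ)] with u hu1 hu
    rw [Set.uIoc_of_le zero_le_one] at hu
    exact tendsto_mul_integral_Dker_sq_mul (h := fun s ↦ F (s, u)) (by fun_prop) hu.1
      (lt_of_le_of_ne hu.2 hu1)

theorem stmt17 (f : ℝ × ℝ → ℝ) (hf : ContinuousOn f (Set.Icc 0 1 ×ˢ Set.Icc 0 1)) :
    Filter.Tendsto
      (fun m : ℕ => (m : ℝ) * ∫ u in (0:ℝ)..1, ∫ s in (0:ℝ)..u, (Dker m s u) ^ 2 * f (s, u))
      Filter.atTop (nhds ((1 / 2) * ∫ s in (0:ℝ)..1, f (s, s))) := by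
  set c : ℝ → ℝ := fun t ↦ max 0 (min 1 t) with hc
  have hcc : Continuous c := by simp only [hc]; fun_prop
  have hcm : ∀ t, c t ∈ Set.Icc (0 : ℝ) 1 := fun t ↦
    ⟨le_max_left _ _, max_le zero_le_one (min_le_left _ _)⟩
  have hcid : ∀ t ∈ Set.Icc (0 : ℝ) 1, c t = t := fun t ht ↦ by simp [hc, ht.1, ht.2]
  set F : ℝ × ℝ → ℝ := fun p ↦ f (c (min p.1 p.2), c (max p.1 p.2)) with hF
  have hFc : Continuous F := hf.comp_continuous (by fun_prop) fun p ↦ ⟨hcm _, hcm _⟩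
  have hFsymm : ∀ s u, F (s, u) = F (u, s) := fun s u ↦ by
    simp only [hF, min_comm s u, max_comm s u]
  have hFf : ∀ s u, 0 ≤ s → s ≤ u → u ≤ 1 → F (s, u) = f (s, u) := fun s u h0 hsu h1 ↦ by
    simp only [hF, min_eq_left hsu, max_eq_right hsu]
    rw [hcid s ⟨h0, hsu.trans h1⟩, hcid u ⟨h0.trans hsu, h1⟩]
  obtain ⟨M, hM⟩ := (isCompact_Icc.prod isCompact_Icc).exists_bound_of_continuousOn hf
  have hFM : ∀ p, |F p| ≤ M := fun p ↦ hM _ ⟨hcm _, hcm _⟩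
  have hD := continuous_Dker
  have hKc : ∀ m, Continuous fun p : ℝ × ℝ ↦ Dker m p.1 p.2 ^ 2 * F p := fun m ↦
    ((hD m).pow 2).mul hFc
  have hlim := tendsto_integral_mul_integral_Dker_sq_mul hFc fun p _ ↦ hFM p
  have hdiag : ∫ u in (0 : ℝ)..1, F (u, u) = ∫ s in (0 : ℝ)..1, f (s, s) := by
    refine intervalIntegral.integral_congr fun u hu ↦ ?_
    rw [Set.uIcc_of_le zero_le_one] at hu
    exact hFf u u hu.1 le_rfl hu.2
  rw [hdiag] at hlim
  refine (hlim.const_mul (1 / 2)).congr fun m ↦ ?_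
  have htri := integral_triangle_eq_half_of_symm (hKc m) fun s u ↦ by
    simp only [Dker_comm m s u, hFsymm s u]
  rw [intervalIntegral.integral_const_mul, mul_left_comm]
  simp only at htri
  rw [← htri]
  congr 1
  refine intervalIntegral.integral_congr fun u hu ↦ intervalIntegral.integral_congr fun s hs ↦ ?_
  rw [Set.uIcc_of_le zero_le_one] at hu
  rw [Set.uIcc_of_le hu.1] at hs
  simp only [hFf s u hs.1 hs.2 hu.2]
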